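/- Let $X$ be a nonempty set, $\circ : X \times X \to X$ a binary operation, and $p, q > 0$ constants. Let $f_1, \dots, f_n : X \to \mathbb{R}$ be $(\circ, p, q)$-convex functions such that $0 \le \max(f_1(x), \dots, f_n(x))$ for all $x \in X$. Then there exist $\lambda_1, \dots, \lambda_n \ge 0$ with $\lambda_1 + \cdots + \lambda_n = 1$ such that $0 \le \lambda_1 f_1(x) + \cdots + \lambda_n f_n(x)$ for all $x \in X$. -/

import Mathlib

/-- A function `f : X → ℝ` is `(op, p, q)`-convex if `f (op x y) ≤ p * f x + q * f y`
for all `x, y`. -/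
def PQConvex {X : Type*} (op : X → X → X) (p q : ℝ) (f : X → ℝ) : Prop :=
  ∀ x y : X, f (op x y) ≤ p * f x + q * f y

/-!
Put `r = p + q` and let `S k` be the set of vectors `v` for which `r ^ k • v` dominates some
`(f₁ x, …, fₙ x)`. Convexity of the `fᵢ` shows that `(p / r) • v + (q / r) • w ∈ S (k + 1)` for
`v, w ∈ S k`. Hence the `S k` increase and their union is stable under this one convex
combination, which makes the closure of the union convex. The maximum condition keeps that closure
away from the open negative orthant, and the coefficients of a separating hyperplane, normalized,
are the weights.
-/

open Set Matrix

section ClosedConvex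

variable {a b : ℝ}

theorem ordConnected_of_isClosed_of_combo_mem (ha : 0 < a) (hb : 0 < b) (hab : a + b = 1)
    {T : Set ℝ} (hT : IsClosed T) (hcombo : ∀ x ∈ T, ∀ y ∈ T, a * x + b * y ∈ T) :
    T.OrdConnected := by
  refine ⟨fun x hx y hy t ⟨hxt, hty⟩ => ?_⟩
  by_contra ht
  -- If `(l, u)` is the gap of `T` around `t`, then `a * l + b * u` lies in that gap.
  obtain ⟨l, ⟨hlT, -, hlt⟩, hl⟩ :=
    (isCompact_Icc.inter_left hT : IsCompact (T ∩ Icc x t)).exists_isGreatest ⟨x, hx, le_rfl, hxt⟩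
  obtain ⟨u, ⟨huT, htu, -⟩, hu⟩ :=
    (isCompact_Icc.inter_left hT : IsCompact (T ∩ Icc t y)).exists_isLeast ⟨y, hy, hty, le_rfl⟩
  have hlt' : l < t := hlt.lt_of_ne (ne_of_mem_of_not_mem hlT ht)
  have hlu : l < u := hlt'.trans_le htu
  obtain ⟨hlm, hmu⟩ : a * l + b * u ∈ Ioo l u := by
    rw [← openSegment_eq_Ioo hlu]
    exact ⟨a, b, ha, hb, hab, rfl⟩
  have hmT := hcombo l hlT u huT
  rcases le_total (a * l + b * u) t with hmt | htm
  · exact hlm.not_ge (hl ⟨hmT, (hl ⟨hx, le_rfl, hxt⟩).trans hlm.le, hmt⟩)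
  · exact hmu.not_ge (hu ⟨hmT, htm, hmu.le.trans (hu ⟨hy, hty, le_rfl⟩)⟩)

variable {E : Type*} [AddCommGroup E] [Module ℝ E] [TopologicalSpace E]
  [IsTopologicalAddGroup E] [ContinuousSMul ℝ E] {S : Set E}

theorem convex_of_isClosed_of_combo_mem (ha : 0 < a) (hb : 0 < b) (hab : a + b = 1)
    (hS : IsClosed S) (hcombo : ∀ v ∈ S, ∀ w ∈ S, a • v + b • w ∈ S) : Convex ℝ S := by
  rw [convex_iff_segment_subset]
  intro v hv w hw
  have hord : (AffineMap.lineMap v w ⁻¹' S : Set ℝ).OrdConnected := by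
    refine ordConnected_of_isClosed_of_combo_mem ha hb hab
      (hS.preimage AffineMap.lineMap_continuous) fun x hx y hy => ?_
    rw [mem_preimage, ← smul_eq_mul, ← smul_eq_mul, Convex.combo_affine_apply hab]
    exact hcombo _ hx _ hy
  rw [segment_eq_image_lineMap, image_subset_iff]
  exact hord.out (by simpa using hv) (by simpa using hw)

theorem convex_closure_of_combo_mem (ha : 0 < a) (hb : 0 < b) (hab : a + b = 1)
    (hcombo : ∀ v ∈ S, ∀ w ∈ S, a • v + b • w ∈ S) : Convex ℝ (closure S) :=
  convex_of_isClosed_of_combo_mem ha hb hab isClosed_closure fun _ hv _ hw =>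
    map_mem_closure₂ (f := fun v w => a • v + b • w) (by fun_prop) hv hw hcombo

end ClosedConvex

section FinitePi

variable {ι : Type*} [Finite ι]

theorem interior_Ici_pi {α : ι → Type*} [∀ i, TopologicalSpace (α i)] [∀ i, LinearOrder (α i)]
    [∀ i, OrderTopology (α i)] [∀ i, DenselyOrdered (α i)] [∀ i, NoMinOrder (α i)]
    (a : ∀ i, α i) : interior (Ici a) = {v | ∀ i, a i < v i} := by
  rw [← pi_univ_Ici, interior_pi_set finite_univ]
  ext v
  simp

theorem exists_le_apply_of_mem_closure {α : ι → Type*} [∀ i, TopologicalSpace (α i)]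
    [∀ i, Preorder (α i)] [∀ i, ClosedIciTopology (α i)] {S : Set (∀ i, α i)} {a v : ∀ i, α i}
    (hS : ∀ v ∈ S, ∃ i, a i ≤ v i) (hv : v ∈ closure S) : ∃ i, a i ≤ v i := by
  have hclosed : IsClosed (⋃ i, {v : ∀ i, α i | a i ≤ v i}) :=
    isClosed_iUnion_of_finite fun i => isClosed_Ici.preimage (continuous_apply i)
  exact mem_iUnion.mp (closure_minimal (fun v hv => mem_iUnion.mpr (hS v hv)) hclosed hv)

end FinitePi

section Separation

theorem nonpos_of_forall_nonneg_mul_le {𝕜 : Type*} [Field 𝕜] [LinearOrder 𝕜]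
    [IsStrictOrderedRing 𝕜] {a u : 𝕜} (h : ∀ t, 0 ≤ t → t * a ≤ u) : a ≤ 0 := by
  by_contra! ha
  have hu : 0 ≤ u := by simpa using h 0 le_rfl
  have := h ((u + 1) / a) (by positivity)
  rw [div_mul_cancel₀ _ ha.ne'] at this
  linarith

theorem exists_ne_zero_nonneg_of_disjoint_neg_interior {E : Type*} [AddCommGroup E] [Module ℝ E]
    [TopologicalSpace E] [IsTopologicalAddGroup E] [ContinuousSMul ℝ E] {K : PointedCone ℝ E}
    {S : Set E} (hK : (interior (K : Set E)).Nonempty) (hS : Convex ℝ S) (hne : S.Nonempty)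
    (hdisj : Disjoint (-interior (K : Set E)) S) :
    ∃ φ : StrongDual ℝ E, φ ≠ 0 ∧ (∀ v ∈ K, 0 ≤ φ v) ∧ ∀ v ∈ S, 0 ≤ φ v := by
  have hdisj' : Disjoint (interior (K : Set E)) (-S) := by
    rw [disjoint_left] at hdisj ⊢
    exact fun v hv => hdisj (by simpa using hv)
  obtain ⟨φ, u, hφ, hφK, hφS⟩ :=
    geometric_hahn_banach_of_nonempty_interior K.convex hS.neg hdisj' hK hne.neg
  have hu : 0 ≤ u := by simpa using hφK 0 K.zero_mem
  refine ⟨-φ, neg_ne_zero.mpr hφ, fun v hv => ?_, fun v hv => ?_⟩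
  · have hφv : φ v ≤ 0 := nonpos_of_forall_nonneg_mul_le fun t ht => by
      simpa using hφK (t • v) (K.smul_mem ht hv)
    simpa using hφv
  · simpa using hu.trans (hφS (-v) (neg_mem_neg.mpr hv))

variable {ι : Type*} [Fintype ι]

theorem inv_sum_smul_mem_stdSimplex {𝕜 : Type*} [Field 𝕜] [LinearOrder 𝕜] [IsStrictOrderedRing 𝕜]
    {w : ι → 𝕜} (hw : 0 ≤ w) (hw0 : w ≠ 0) : (∑ i, w i)⁻¹ • w ∈ stdSimplex 𝕜 ι := by
  have hsum : 0 < ∑ i, w i := Fintype.sum_pos (hw.lt_of_ne' hw0)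
  refine ⟨fun i => mul_nonneg (inv_nonneg.mpr hsum.le) (hw i), ?_⟩
  simp only [Pi.smul_apply, smul_eq_mul, ← Finset.mul_sum, inv_mul_cancel₀ hsum.ne']

/-- A convex-set form of Gordan's theorem of the alternative. -/
theorem exists_mem_stdSimplex_forall_dotProduct_nonneg {S : Set (ι → ℝ)} (hS : Convex ℝ S)
    (hne : S.Nonempty) (hnonneg : ∀ v ∈ S, ∃ i, 0 ≤ v i) :
    ∃ w ∈ stdSimplex ℝ ι, ∀ v ∈ S, 0 ≤ w ⬝ᵥ v := by
  classical
  have hK : interior (PointedCone.positive ℝ (ι → ℝ) : Set (ι → ℝ)) = {v | ∀ i, 0 < v i} :=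
    interior_Ici_pi 0
  have hdisj : Disjoint (-interior (PointedCone.positive ℝ (ι → ℝ) : Set (ι → ℝ))) S := by
    rw [hK, disjoint_right]
    intro v hv hneg
    obtain ⟨i, hi⟩ := hnonneg v hv
    exact hi.not_gt (neg_pos.mp (hneg i))
  obtain ⟨φ, hφ0, hφK, hφS⟩ := exists_ne_zero_nonneg_of_disjoint_neg_interior
    (hK ▸ ⟨1, fun _ => one_pos⟩) hS hne hdisj
  obtain ⟨w, hw⟩ := (dotProductEquiv ℝ ι).surjective φ.toLinearMap
  have hwφ : ∀ v, w ⬝ᵥ v = φ v := fun v => DFunLike.congr_fun hw v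
  have hw_nonneg : 0 ≤ w := fun i => by
    rw [Pi.zero_apply, ← dotProduct_single_one w i, hwφ]
    exact hφK _ (Pi.single_nonneg.mpr zero_le_one)
  have hw_ne : w ≠ 0 := by
    rintro rfl
    exact hφ0 (ContinuousLinearMap.ext fun v => by simp [← hwφ])
  refine ⟨_, inv_sum_smul_mem_stdSimplex hw_nonneg hw_ne, fun v hv => ?_⟩
  rw [smul_dotProduct, hwφ]
  exact smul_nonneg (inv_nonneg.mpr (Finset.sum_nonneg fun i _ => hw_nonneg i)) (hφS v hv)

end Separation

section ScaledUpperImage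

variable {X ι : Type*} {circ : X → X → X} {p q r : ℝ} {f : ι → X → ℝ} {k : ℕ} {v w : ι → ℝ}

/-- The upper image `{v | ∃ x, ∀ i, f i x ≤ v i}` of a family of functions, rescaled by
`(r ^ k)⁻¹` (for `r > 0`; the inequality is written without division). For a family of
`(op, p, q)`-convex functions and `r = p + q` these sets increase with `k`, and the closure of
their union is convex. -/
def scaledUpperImage (r : ℝ) (f : ι → X → ℝ) (k : ℕ) : Set (ι → ℝ) :=
  {v | ∃ x, ∀ i, f i x ≤ r ^ k * v i}

theorem apply_mem_scaledUpperImage_zero (r : ℝ) (f : ι → X → ℝ) (x : X) :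
    (f · x) ∈ scaledUpperImage r f 0 :=
  ⟨x, fun i => by simp⟩

theorem exists_nonneg_of_mem_scaledUpperImage (hr : 0 < r) (hf : ∀ x, ∃ i, 0 ≤ f i x)
    (hv : v ∈ scaledUpperImage r f k) : ∃ i, 0 ≤ v i := by
  obtain ⟨x, hx⟩ := hv
  obtain ⟨i, hi⟩ := hf x
  exact ⟨i, nonneg_of_mul_nonneg_right (hi.trans (hx i)) (pow_pos hr k)⟩

theorem combo_mem_scaledUpperImage_succ (hp : 0 ≤ p) (hq : 0 ≤ q) (hpq : p + q ≠ 0)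
    (hf : ∀ i, PQConvex circ p q (f i)) (hv : v ∈ scaledUpperImage (p + q) f k)
    (hw : w ∈ scaledUpperImage (p + q) f k) :
    (p / (p + q)) • v + (q / (p + q)) • w ∈ scaledUpperImage (p + q) f (k + 1) := by
  obtain ⟨x, hx⟩ := hv
  obtain ⟨y, hy⟩ := hw
  refine ⟨circ x y, fun i => ?_⟩
  calc f i (circ x y) ≤ p * f i x + q * f i y := hf i x y
    _ ≤ p * ((p + q) ^ k * v i) + q * ((p + q) ^ k * w i) := by
      gcongr
      exacts [hx i, hy i]
    _ = (p + q) ^ (k + 1) * ((p / (p + q)) • v + (q / (p + q)) • w) i := by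
      simp only [Pi.add_apply, Pi.smul_apply, smul_eq_mul]
      field_simp
      ring

theorem monotone_scaledUpperImage (hp : 0 ≤ p) (hq : 0 ≤ q) (hpq : p + q ≠ 0)
    (hf : ∀ i, PQConvex circ p q (f i)) : Monotone (scaledUpperImage (p + q) f) := by
  refine monotone_nat_of_le_succ fun k v hv => ?_
  have hcombo := combo_mem_scaledUpperImage_succ hp hq hpq hf hv hv
  rwa [← add_smul, ← add_div, div_self hpq, one_smul] at hcombo

theorem convex_closure_iUnion_scaledUpperImage (hp : 0 < p) (hq : 0 < q)
    (hf : ∀ i, PQConvex circ p q (f i)) :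
    Convex ℝ (closure (⋃ k, scaledUpperImage (p + q) f k)) := by
  have hpq : p + q ≠ 0 := (add_pos hp hq).ne'
  have hmono := monotone_scaledUpperImage hp.le hq.le hpq hf
  refine convex_closure_of_combo_mem (a := p / (p + q)) (b := q / (p + q)) (by positivity)
    (by positivity) (by rw [← add_div, div_self hpq]) fun v hv w hw => ?_
  obtain ⟨k, hk⟩ := mem_iUnion.mp hv
  obtain ⟨l, hl⟩ := mem_iUnion.mp hw
  exact mem_iUnion.mpr ⟨max k l + 1, combo_mem_scaledUpperImage_succ hp.le hq.le hpq hf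
    (hmono (le_max_left k l) hk) (hmono (le_max_right k l) hl)⟩

end ScaledUpperImage

/-- The discrete Maximum Theorem for `(∘, p, q)`-convex functions. -/
theorem maximum_theorem_pqConvex
    {X : Type*} [Nonempty X] (circ : X → X → X) {p q : ℝ} (hp : 0 < p) (hq : 0 < q)
    {n : ℕ} (hn : 0 < n) (f : Fin n → X → ℝ)
    (hconv : ∀ i, PQConvex circ p q (f i))
    (hmax : ∀ x : X, 0 ≤ Finset.univ.sup' ⟨⟨0, hn⟩, Finset.mem_univ _⟩ fun i => f i x) :
    ∃ lam : Fin n → ℝ, (∀ i, 0 ≤ lam i) ∧ (∑ i, lam i = 1) ∧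
      ∀ x : X, 0 ≤ ∑ i, lam i * f i x := by
  have hf : ∀ x, ∃ i, 0 ≤ f i x := fun x => by
    simpa using (Finset.le_sup'_iff _).mp (hmax x)
  let S := ⋃ k, scaledUpperImage (p + q) f k
  have hfS : ∀ x, (f · x) ∈ closure S := fun x =>
    subset_closure (mem_iUnion.mpr ⟨0, apply_mem_scaledUpperImage_zero (p + q) f x⟩)
  have hS : ∀ v ∈ S, ∃ i, 0 ≤ v i := fun v hv =>
    let ⟨_, hk⟩ := mem_iUnion.mp hv
    exists_nonneg_of_mem_scaledUpperImage (add_pos hp hq) hf hk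
  obtain ⟨lam, ⟨hlam_nonneg, hlam_sum⟩, hlam⟩ := exists_mem_stdSimplex_forall_dotProduct_nonneg
    (convex_closure_iUnion_scaledUpperImage hp hq hconv) ⟨_, hfS (Classical.arbitrary X)⟩
    fun v hv => exists_le_apply_of_mem_closure (a := 0) hS hv
  exact ⟨lam, hlam_nonneg, hlam_sum, fun x => hlam _ (hfS x)⟩
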